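/- Let f(x) = a·x² + b·x + c with a ≥ 1 and b, c ≥ 0, and let n ≥ 2. For all consecutive vertices v_{i−1}, v_i of the q-Jaco graph J_n(f) (with 2 ≤ i ≤ n), the degrees in the underlying graph J*_n(f) satisfy |d(v_i) − d(v_{i−1})| ≤ a·(2i − 1) + b. -/

import Mathlib

/-- In-degree of vertex `v_j` in the (root) Jaco graph with incidence function `f`:
`d⁻(v_j) = |{ i : 1 ≤ i < j, i + f i − d⁻(v_i) ≥ j }|`. -/
noncomputable def jacoIn (f : ℕ → ℕ) (j : ℕ) : ℕ :=
  Nat.strongRecOn j (fun j ih =>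
    (((Finset.Ico 1 j).attach).filter (fun i : {x // x ∈ Finset.Ico 1 j} =>
      j ≤ i.1 + f i.1 - ih i.1 (Finset.mem_Ico.mp i.2).2)).card)

/-- The arc `(v_i, v_j)` is present in the Jaco graph iff `1 ≤ i < j` and
`i + f i − d⁻(v_i) ≥ j`. -/
def jacoArc (f : ℕ → ℕ) (i j : ℕ) : Prop :=
  1 ≤ i ∧ i < j ∧ j ≤ i + f i - jacoIn f i

noncomputable instance (f : ℕ → ℕ) (i j : ℕ) : Decidable (jacoArc f i j) := by
  unfold jacoArc; infer_instance

/-- The underlying undirected simple graph `J*_n(f)` of the finite Jaco graph `J_n(f)`,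
on vertex set `{v_1, …, v_n}` (vertex `x : Fin n` represents `v_{x+1}`). -/
def jacoGraph (f : ℕ → ℕ) (n : ℕ) : SimpleGraph (Fin n) :=
  SimpleGraph.fromRel (fun x y => jacoArc f (x.1 + 1) (y.1 + 1))

noncomputable instance (f : ℕ → ℕ) (n : ℕ) : DecidableRel (jacoGraph f n).Adj := fun x y =>
  decidable_of_iff
    (x ≠ y ∧ (jacoArc f (x.1 + 1) (y.1 + 1) ∨ jacoArc f (y.1 + 1) (x.1 + 1)))
    (by unfold jacoGraph; exact (SimpleGraph.fromRel_adj (fun a b : Fin n => jacoArc f (a.1 + 1) (b.1 + 1)) x y).symm)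


/-!
A vertex `v_j` has in-degree `d⁻(v_j)` and its out-neighbours are the next `f j - d⁻(v_j)` vertices,
cut off at `v_n`, so `d(v_j) = min (f j) (n - j + d⁻(v_j))` whenever `d⁻(v_j) ≤ f j`. For strictly
increasing `f`, every arc `(v_i, v_j)` gives an arc `(v_{i+1}, v_{j+1})`, so that in-degrees go up by
`0` or `1` at each vertex. The second entry of the minimum therefore moves by at most
`1 ≤ f (j + 1) - f j`, and a minimum never moves by more than both of its entries do.
-/

open Finset

theorem jacoIn_eq_card_filter_jacoArc (f : ℕ → ℕ) (j : ℕ) :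
    jacoIn f j = #{i ∈ Ico 1 j | jacoArc f i j} := by
  have unfold_rec : jacoIn f j = #{i ∈ (Ico 1 j).attach | j ≤ i.1 + f i.1 - jacoIn f i.1} := by
    conv_lhs => rw [jacoIn, Nat.strongRecOn_eq]
    rfl
  rw [unfold_rec, card_filter,
    sum_attach (Ico 1 j) fun i ↦ if j ≤ i + f i - jacoIn f i then 1 else 0, ← card_filter]
  congr 1
  ext i
  simp only [mem_filter, mem_Ico]
  unfold jacoArc
  tauto

theorem jacoIn_le_pred (f : ℕ → ℕ) (j : ℕ) : jacoIn f j ≤ j - 1 := by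
  rw [jacoIn_eq_card_filter_jacoArc]
  exact (card_filter_le _ _).trans_eq (Nat.card_Ico 1 j)

theorem jacoIn_succ_le (f : ℕ → ℕ) (j : ℕ) : jacoIn f (j + 1) ≤ jacoIn f j + 1 := by
  rw [jacoIn_eq_card_filter_jacoArc f (j + 1), jacoIn_eq_card_filter_jacoArc f j]
  refine (card_le_card fun i hi ↦ ?_).trans (card_insert_le j _)
  simp only [mem_filter, mem_Ico, mem_insert] at hi ⊢
  unfold jacoArc at hi ⊢
  omega

theorem jacoArc.succ_succ {f : ℕ → ℕ} (hf : StrictMono f) {i j : ℕ} (h : jacoArc f i j) :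
    jacoArc f (i + 1) (j + 1) := by
  obtain ⟨hi, hij, hj⟩ := h
  have in_step : jacoIn f (i + 1) ≤ jacoIn f i + 1 := jacoIn_succ_le f i
  have f_step : f i < f (i + 1) := hf i.lt_succ_self
  exact ⟨by omega, by omega, by omega⟩

theorem monotone_jacoIn {f : ℕ → ℕ} (hf : StrictMono f) : Monotone (jacoIn f) := by
  refine monotone_nat_of_le_succ fun j ↦ ?_
  rw [jacoIn_eq_card_filter_jacoArc f j, jacoIn_eq_card_filter_jacoArc f (j + 1)]
  refine card_le_card_of_injOn (· + 1) (fun i hi ↦ ?_) (add_left_injective 1).injOn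
  simp only [coe_filter, Set.mem_ofPred_eq, mem_Ico] at hi ⊢
  exact ⟨by omega, hi.2.succ_succ hf⟩

theorem card_filter_jacoArc_in (f : ℕ → ℕ) {n j : ℕ} (hj : j ≤ n) :
    #{i ∈ Icc 1 n | jacoArc f i j} = jacoIn f j := by
  rw [jacoIn_eq_card_filter_jacoArc]
  congr 1
  ext i
  simp only [mem_filter, mem_Icc, mem_Ico]
  unfold jacoArc
  omega

theorem card_filter_jacoArc_out (f : ℕ → ℕ) (n : ℕ) {j : ℕ} (hj : 1 ≤ j) :
    #{k ∈ Icc 1 n | jacoArc f j k} = min n (j + f j - jacoIn f j) - j := by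
  have out_eq_Ioc : {k ∈ Icc 1 n | jacoArc f j k} = Ioc j (min n (j + f j - jacoIn f j)) := by
    ext k
    simp only [mem_filter, mem_Icc, mem_Ioc, le_min_iff]
    unfold jacoArc
    omega
  rw [out_eq_Ioc, Nat.card_Ioc]

theorem map_neighborFinset_jacoGraph (f : ℕ → ℕ) {n j : ℕ} (hj : j < n) :
    ((jacoGraph f n).neighborFinset ⟨j, hj⟩).map (Fin.valEmbedding.trans (addRightEmbedding 1)) =
      {k ∈ Icc 1 n | jacoArc f k (j + 1)} ∪ {k ∈ Icc 1 n | jacoArc f (j + 1) k} := by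
  ext k
  simp only [mem_map, SimpleGraph.mem_neighborFinset, mem_union, mem_filter, mem_Icc]
  constructor
  · rintro ⟨x, hx, rfl⟩
    have x_mem : 1 ≤ x.1 + 1 ∧ x.1 + 1 ≤ n := ⟨by omega, x.2⟩
    exact ((SimpleGraph.fromRel_adj ..).1 hx).2.symm.imp (⟨x_mem, ·⟩) (⟨x_mem, ·⟩)
  · intro hk
    obtain ⟨x, rfl⟩ : ∃ x, k = x + 1 := Nat.exists_eq_add_of_le' (hk.elim (·.1.1) (·.1.1))
    have hx : x < n := hk.elim (·.1.2) (·.1.2)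
    have arc : jacoArc f (j + 1) (x + 1) ∨ jacoArc f (x + 1) (j + 1) :=
      hk.symm.imp And.right And.right
    have ne : j ≠ x := by
      unfold jacoArc at arc
      omega
    exact ⟨⟨x, hx⟩, (SimpleGraph.fromRel_adj ..).2 ⟨by simpa using ne, arc⟩, rfl⟩

theorem degree_jacoGraph (f : ℕ → ℕ) {n j : ℕ} (hj : j < n) :
    (jacoGraph f n).degree ⟨j, hj⟩ =
      jacoIn f (j + 1) + (min n (j + 1 + f (j + 1) - jacoIn f (j + 1)) - (j + 1)) := by
  have disj : Disjoint {k ∈ Icc 1 n | jacoArc f k (j + 1)} {k ∈ Icc 1 n | jacoArc f (j + 1) k} :=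
    disjoint_filter.2 fun _ _ hin hout ↦ hin.2.1.asymm hout.2.1
  rw [← SimpleGraph.card_neighborFinset_eq_degree,
    ← card_map (Fin.valEmbedding.trans (addRightEmbedding 1)), map_neighborFinset_jacoGraph,
    card_union_of_disjoint disj, card_filter_jacoArc_in f hj,
    card_filter_jacoArc_out f n j.succ_pos]

theorem degree_jacoGraph_eq_min {f : ℕ → ℕ} {n j : ℕ} (hj : j < n)
    (h : jacoIn f (j + 1) ≤ f (j + 1)) :
    (jacoGraph f n).degree ⟨j, hj⟩ = min (f (j + 1)) (n - (j + 1) + jacoIn f (j + 1)) := by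
  rw [degree_jacoGraph]
  omega

theorem jacoIn_le_of_strictMono {f : ℕ → ℕ} (hf : StrictMono f) (j : ℕ) : jacoIn f j ≤ f j :=
  (jacoIn_le_pred f j).trans ((Nat.pred_le j).trans hf.le_apply)

theorem qJaco_consecutive_degree_difference_general {f : ℕ → ℕ} (hf : StrictMono f) {n j : ℕ}
    (hj : j + 1 < n) :
    |((jacoGraph f n).degree ⟨j + 1, hj⟩ : ℤ) -
      ((jacoGraph f n).degree ⟨j, j.lt_succ_self.trans hj⟩ : ℤ)| ≤
      (f (j + 2) : ℤ) - (f (j + 1) : ℤ) := by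
  have f_step : f (j + 1) < f (j + 2) := hf (j + 1).lt_succ_self
  have in_le_succ : jacoIn f (j + 1) ≤ jacoIn f (j + 2) := monotone_jacoIn hf (j + 1).le_succ
  have in_succ_le : jacoIn f (j + 2) ≤ jacoIn f (j + 1) + 1 := jacoIn_succ_le f (j + 1)
  have degree_eq : (jacoGraph f n).degree ⟨j, j.lt_succ_self.trans hj⟩ =
      min (f (j + 1)) (n - (j + 1) + jacoIn f (j + 1)) :=
    degree_jacoGraph_eq_min _ (jacoIn_le_of_strictMono hf _)
  have degree_succ_eq : (jacoGraph f n).degree ⟨j + 1, hj⟩ =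
      min (f (j + 2)) (n - (j + 2) + jacoIn f (j + 2)) :=
    degree_jacoGraph_eq_min _ (jacoIn_le_of_strictMono hf _)
  rw [degree_eq, degree_succ_eq, Nat.cast_min, Nat.cast_min]
  refine (abs_min_sub_min_le_max _ _ _ _).trans (max_le ?_ ?_)
  · exact (abs_of_pos (by omega)).le
  · rw [abs_le]
    omega

theorem strictMono_quadratic {a : ℕ} (ha : 1 ≤ a) (b c : ℕ) :
    StrictMono fun x : ℕ ↦ a * x ^ 2 + b * x + c :=
  strictMono_nat_of_lt_succ fun x ↦ by nlinarith

/-- For `f(x) = a·x² + b·x + c` (`a ≥ 1`, `b, c ≥ 0`), `n ≥ 2`, and any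
consecutive vertices `v_{i−1}, v_i` (`2 ≤ i ≤ n`) of the q-Jaco graph `J_n(f)`, the
degrees in the underlying graph satisfy `|d(v_i) − d(v_{i−1})| ≤ a·(2i − 1) + b`.
(Vertex `v_j` is represented by `⟨j - 1, _⟩ : Fin n`.) -/
theorem qJaco_consecutive_degree_difference (a b c n : ℕ) (ha : 1 ≤ a) (hn : 2 ≤ n)
    (i : ℕ) (hi : 2 ≤ i) (hin : i ≤ n) :
    |((jacoGraph (fun x => a * x ^ 2 + b * x + c) n).degree ⟨i - 1, by omega⟩ : ℤ) -
      ((jacoGraph (fun x => a * x ^ 2 + b * x + c) n).degree ⟨i - 2, by omega⟩ : ℤ)| ≤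
      (a : ℤ) * (2 * (i : ℤ) - 1) + (b : ℤ) := by
  obtain ⟨j, rfl⟩ := Nat.exists_eq_add_of_le' hi
  exact (qJaco_consecutive_degree_difference_general (strictMono_quadratic ha b c) hin).trans_eq
    (by push_cast; ring)
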